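/- arXiv:1504.08259 — 2 statements merged into one kernel-verified Lean document; each statement's English description precedes it below -/
import Mathlib

section
/- Let M be an NFA over an alphabet Σ with state set Q in which every state is accepting, and let u₁, …, u_k (k ≥ 1) be words over Σ such that the nested reachability set R(u_k, R(u_{k−1}, …, R(u₁, Q)…)) is empty. Then for every natural number ℓ and all words s₁, …, s_{k+1} over Σ, every word w' accepted by M satisfies ed(s₁u₁^ℓ s₂u₂^ℓ⋯s_k u_k^ℓ s_{k+1}, w') ≥ ℓ; equivalently, ed({s₁u₁^ℓ⋯s_k u_k^ℓ s_{k+1}}, M.accepts) ≥ ℓ. -/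
/-- A cost structure for Levenshtein edit distance (as in the older Mathlib). -/
structure Levenshtein.Cost (α β δ : Type*) where
  /-- Cost to delete an element from a list. -/
  delete : α → δ
  /-- Cost to insert an element into a list. -/
  insert : β → δ
  /-- Cost to substitute one element for another in a list. -/
  substitute : α → β → δ

/-- The default cost structure, for which all operations cost `1` (as in the older Mathlib). -/
def Levenshtein.defaultCost {α : Type*} [DecidableEq α] : Levenshtein.Cost α α ℕ where
  delete _ := 1
  insert _ := 1
  substitute a b := if a = b then 0 else 1

/-- (Implementation detail for `levenshtein`, as in the older Mathlib.) Given the distances from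
each suffix of `xs` to `ys`, compute the distances from each suffix of `xs` to `y :: ys`. -/
def Levenshtein.impl {α β δ : Type*} [AddZeroClass δ] [Min δ] (C : Levenshtein.Cost α β δ)
    (xs : List α) (y : β) (d : {r : List δ // 0 < r.length}) : {r : List δ // 0 < r.length} :=
  let ⟨ds, w⟩ := d
  xs.zip (ds.zip ds.tail) |>.foldr
    (init := ⟨[C.insert y + ds.getLast (List.length_pos_iff.mp w)], by simp⟩)
    (fun ⟨x, d₀, d₁⟩ ⟨r, w⟩ =>
      ⟨min (C.delete x + r[0]) (min (C.insert y + d₀) (C.substitute x y + d₁)) :: r, by simp⟩)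

/-- `suffixLevenshtein C xs ys` computes the Levenshtein distance (using the cost functions
provided by `C`) from each suffix of the list `xs` to the list `ys` (as in the older Mathlib). -/
def suffixLevenshtein {α β δ : Type*} [AddZeroClass δ] [Min δ] (C : Levenshtein.Cost α β δ)
    (xs : List α) (ys : List β) : {r : List δ // 0 < r.length} :=
  ys.foldr
    (Levenshtein.impl C xs)
    (xs.foldr (init := ⟨[0], by simp⟩) (fun a ⟨r, w⟩ => ⟨(C.delete a + r[0]) :: r, by simp⟩))

/-- `levenshtein C xs ys` computes the Levenshtein distance (using the cost functions provided
by `C`) from the list `xs` to the list `ys` (as in the older Mathlib). -/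
def levenshtein {α β δ : Type*} [AddZeroClass δ] [Min δ] (C : Levenshtein.Cost α β δ)
    (xs : List α) (ys : List β) : δ :=
  let ⟨r, w⟩ := suffixLevenshtein C xs ys
  r[0]

/-- Levenshtein edit distance between two words. -/
def ed {α : Type*} [DecidableEq α] (w₁ w₂ : List α) : ℕ :=
  levenshtein Levenshtein.defaultCost w₁ w₂

/-- Edit distance from a word to a language, valued in `ℕ∞`. -/
noncomputable def edWordLang {α : Type*} [DecidableEq α] (w : List α) (L : Language α) : ℕ∞ :=
  ⨅ w' ∈ L, (ed w w' : ℕ∞)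

/-- Edit distance from language `L₁` to language `L₂`, valued in `ℕ∞`. -/
noncomputable def edLang {α : Type*} [DecidableEq α] (L₁ L₂ : Language α) : ℕ∞ :=
  ⨆ w ∈ L₁, edWordLang w L₂

/-- `u ^ ℓ` : concatenation of `ℓ` copies of `u`. -/
def wpow {α : Type*} (u : List α) (ℓ : ℕ) : List α := (List.replicate ℓ u).flatten

/-- The interleaved concatenation `s₁u₁s₂u₂⋯s_k u_k s_{k+1}` where
`ss = [s₁, …, s_{k+1}]` and `us = [u₁, …, u_k]`. -/
def weave {α : Type*} (ss us : List (List α)) : List α :=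
  (List.zipWith (· ++ ·) ss us).flatten ++ (ss.drop us.length).flatten

/-- A context-free grammar is in Chomsky normal form. -/
def ContextFreeGrammar.IsCNF {α : Type*} (G : ContextFreeGrammar α) : Prop :=
  ∀ r ∈ G.rules,
    (∃ z u : G.NT, r.output = [Symbol.nonterminal z, Symbol.nonterminal u]) ∨
    (∃ a : α, r.output = [Symbol.terminal a]) ∨
    (r.input = G.initial ∧ r.output = [])

/-- Compact `G`-decomposition of the word `w`. -/
def IsCompactDecomp {α : Type*} (G : ContextFreeGrammar α) [Fintype G.NT]
    (w : List α) (ss us : List (List α)) : Prop :=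
  ss.length = us.length + 1 ∧ w = weave ss us ∧
  (∀ ℓ : ℕ, weave ss (us.map (fun u => wpow u ℓ)) ∈ G.language) ∧
  (ss.map List.length).sum ≤ 2 ^ Fintype.card G.NT ∧
  us.length ≤ 2 ^ (Fintype.card G.NT + 1) - 2

/-- The reachability set `R(u, S')`: states reachable (by any word) from the set of states
reachable from `S'` upon reading `u`. -/
def reachSet {α σ : Type*} (M : NFA α σ) (u : List α) (S' : Set σ) : Set σ :=
  { q | ∃ v : List α, q ∈ M.evalFrom (M.evalFrom S' u) v }

/-- Prefix closure of a language. -/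
def prefLang {α : Type*} (L : Language α) : Language α := { u | ∃ v, u ++ v ∈ L }

/-!
An optimal alignment of `s₁u₁^ℓ⋯s_k u_k^ℓ s_{k+1}` with `w` cuts `w` into consecutive pieces, one
for each factor, whose costs add up to at most the distance. If the distance is below `ℓ`, then
among the `ℓ` copies of `uᵢ` some copy is aligned at cost zero, so `uᵢ` itself occurs in its piece.
Hence `w = t₁u₁⋯t_k u_k t_{k+1}` for some words `tᵢ`, and every run of `M` on such a word ends in
the nested reachability set.
-/

section Levenshtein

variable {α β δ : Type*}

section Recursion

variable [AddZeroClass δ] [Min δ] (C : Levenshtein.Cost α β δ)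

theorem Levenshtein.impl_cons (x : α) (xs : List α) (y : β) {d t : {r : List δ // 0 < r.length}}
    (hd : d.1.tail = t.1) :
    (Levenshtein.impl C (x :: xs) y d).1 =
      min (C.delete x + (Levenshtein.impl C xs y t).1[0]'(Levenshtein.impl C xs y t).2)
        (min (C.insert y + d.1[0]'d.2) (C.substitute x y + t.1[0]'t.2)) ::
      (Levenshtein.impl C xs y t).1 := by
  obtain ⟨_ | ⟨d₀, _ | ⟨t₀, ts⟩⟩, hpos⟩ := d
  · simp at hpos
  · exact absurd t.2 (by simp [← hd])
  · obtain rfl : t = ⟨t₀ :: ts, by simp⟩ := Subtype.ext hd.symm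
    rfl

theorem tail_suffixLevenshtein_cons (x : α) (xs : List α) (ys : List β) :
    (suffixLevenshtein C (x :: xs) ys).1.tail = (suffixLevenshtein C xs ys).1 := by
  induction ys with
  | nil => rfl
  | cons y ys ih => exact congrArg List.tail (Levenshtein.impl_cons C x xs y ih)

theorem levenshtein_nil_nil : levenshtein C [] [] = 0 := rfl

theorem levenshtein_cons_nil (x : α) (xs : List α) :
    levenshtein C (x :: xs) [] = C.delete x + levenshtein C xs [] := rfl

theorem levenshtein_nil_cons (y : β) (ys : List β) :
    levenshtein C [] (y :: ys) = C.insert y + levenshtein C [] ys := by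
  obtain ⟨d, hd⟩ : ∃ d, suffixLevenshtein C ([] : List α) ys = ⟨[d], by simp⟩ := by
    cases ys <;> exact ⟨_, rfl⟩
  change (Levenshtein.impl C [] y (suffixLevenshtein C [] ys)).1[0]'_ =
    C.insert y + (suffixLevenshtein C [] ys).1[0]'_
  simp only [hd]
  rfl

theorem levenshtein_cons_cons (x : α) (xs : List α) (y : β) (ys : List β) :
    levenshtein C (x :: xs) (y :: ys) =
      min (C.delete x + levenshtein C xs (y :: ys))
        (min (C.insert y + levenshtein C (x :: xs) ys)
          (C.substitute x y + levenshtein C xs ys)) := by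
  change (Levenshtein.impl C (x :: xs) y (suffixLevenshtein C (x :: xs) ys)).1[0]'_ = _
  simp only [Levenshtein.impl_cons C x xs y (tail_suffixLevenshtein_cons C x xs ys)]
  rfl

end Recursion

section Bounds

variable [AddZeroClass δ] [LinearOrder δ] (C : Levenshtein.Cost α β δ)

theorem levenshtein_cons_le_delete_add (x : α) (xs : List α) (ys : List β) :
    levenshtein C (x :: xs) ys ≤ C.delete x + levenshtein C xs ys := by
  cases ys with
  | nil => exact (levenshtein_cons_nil C x xs).le
  | cons y ys => exact (levenshtein_cons_cons C x xs y ys).trans_le (min_le_left _ _)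

theorem levenshtein_cons_cons_le_insert_add (x : α) (xs : List α) (y : β) (ys : List β) :
    levenshtein C (x :: xs) (y :: ys) ≤ C.insert y + levenshtein C (x :: xs) ys :=
  (levenshtein_cons_cons C x xs y ys).trans_le ((min_le_right _ _).trans (min_le_left _ _))

theorem levenshtein_cons_cons_le_substitute_add (x : α) (xs : List α) (y : β) (ys : List β) :
    levenshtein C (x :: xs) (y :: ys) ≤ C.substitute x y + levenshtein C xs ys :=
  (levenshtein_cons_cons C x xs y ys).trans_le ((min_le_right _ _).trans (min_le_right _ _))

theorem levenshtein_cons_cons_eq_or (x : α) (xs : List α) (y : β) (ys : List β) :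
    levenshtein C (x :: xs) (y :: ys) = C.delete x + levenshtein C xs (y :: ys) ∨
      levenshtein C (x :: xs) (y :: ys) = C.insert y + levenshtein C (x :: xs) ys ∨
      levenshtein C (x :: xs) (y :: ys) = C.substitute x y + levenshtein C xs ys := by
  rw [levenshtein_cons_cons]
  exact (min_choice _ _).imp_right fun hmin =>
    (min_choice _ _).imp (hmin.trans ·) (hmin.trans ·)

end Bounds

theorem exists_append_eq_levenshtein_add_le [AddMonoid δ] [LinearOrder δ] [AddLeftMono δ]
    [AddRightMono δ] (C : Levenshtein.Cost α β δ) (a b : List α) (w : List β) :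
    ∃ w₁ w₂, w₁ ++ w₂ = w ∧
      levenshtein C a w₁ + levenshtein C b w₂ ≤ levenshtein C (a ++ b) w := by
  induction a generalizing w with
  | nil => exact ⟨[], w, rfl, by simp [levenshtein_nil_nil]⟩
  | cons x a iha =>
    have prepend_cost {c A A' B D : δ} (hA : A' ≤ c + A) (hD : A + B ≤ D) : A' + B ≤ c + D :=
      calc A' + B ≤ c + A + B := by gcongr
        _ = c + (A + B) := add_assoc c A B
        _ ≤ c + D := by gcongr
    induction w with
    | nil =>
      obtain ⟨w₁, w₂, hw, hle⟩ := iha []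
      exact ⟨w₁, w₂, hw, prepend_cost (levenshtein_cons_le_delete_add C x a w₁) hle⟩
    | cons y w ihw =>
      rw [List.cons_append]
      obtain hdelete | hinsert | hsubstitute := levenshtein_cons_cons_eq_or C x (a ++ b) y w
      · obtain ⟨w₁, w₂, hw, hle⟩ := iha (y :: w)
        rw [hdelete]
        exact ⟨w₁, w₂, hw, prepend_cost (levenshtein_cons_le_delete_add C x a w₁) hle⟩
      · obtain ⟨w₁, w₂, rfl, hle⟩ := ihw
        rw [hinsert]
        exact ⟨y :: w₁, w₂, rfl,
          prepend_cost (levenshtein_cons_cons_le_insert_add C x a y w₁) hle⟩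
      · obtain ⟨w₁, w₂, rfl, hle⟩ := iha w
        rw [hsubstitute]
        exact ⟨y :: w₁, w₂, rfl,
          prepend_cost (levenshtein_cons_cons_le_substitute_add C x a y w₁) hle⟩

end Levenshtein

section EditDistance

variable {α : Type*} [DecidableEq α]

theorem exists_append_eq_ed_add_le (a b w : List α) :
    ∃ w₁ w₂, w₁ ++ w₂ = w ∧ ed a w₁ + ed b w₂ ≤ ed (a ++ b) w :=
  exists_append_eq_levenshtein_add_le Levenshtein.defaultCost a b w

theorem eq_of_ed_eq_zero {v w : List α} (h : ed v w = 0) : v = w := by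
  induction v generalizing w with
  | nil =>
    cases w with
    | nil => rfl
    | cons y w => simp [ed, levenshtein_nil_cons, Levenshtein.defaultCost] at h
  | cons x v ih =>
    cases w with
    | nil => simp [ed, levenshtein_cons_nil, Levenshtein.defaultCost] at h
    | cons y w =>
      obtain ⟨hxy, hvw⟩ : x = y ∧ ed v w = 0 := by
        simpa [ed, levenshtein_cons_cons, Levenshtein.defaultCost] using h
      rw [hxy, ih hvw]

theorem exists_mem_isInfix_of_ed_flatten_lt_length {vs : List (List α)} {w : List α}
    (h : ed vs.flatten w < vs.length) : ∃ v ∈ vs, v <:+: w := by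
  induction vs generalizing w with
  | nil => simp at h
  | cons v vs ih =>
    rw [List.flatten_cons, List.length_cons] at h
    obtain ⟨w₁, w₂, rfl, hle⟩ := exists_append_eq_ed_add_le v vs.flatten w
    by_cases hv : ed v w₁ = 0
    · obtain rfl := eq_of_ed_eq_zero hv
      exact ⟨v, List.mem_cons_self, (List.prefix_append v w₂).isInfix⟩
    · obtain ⟨v', hv', hinfix⟩ := ih (w := w₂) (by omega)
      exact ⟨v', List.mem_cons_of_mem v hv', hinfix.trans (List.suffix_append w₁ w₂).isInfix⟩

theorem isInfix_of_ed_wpow_lt {u w : List α} {n : ℕ} (h : ed (wpow u n) w < n) : u <:+: w := by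
  obtain ⟨v, hv, hinfix⟩ :=
    exists_mem_isInfix_of_ed_flatten_lt_length (h.trans_eq List.length_replicate.symm)
  rwa [List.eq_of_mem_replicate hv] at hinfix

end EditDistance

section Weave

variable {α : Type*}

theorem weave_cons_cons (s u : List α) (ss us : List (List α)) :
    weave (s :: ss) (u :: us) = s ++ (u ++ weave ss us) := by
  simp [weave]

theorem append_weave_cons (p t : List α) (ts us : List (List α)) :
    p ++ weave (t :: ts) us = weave ((p ++ t) :: ts) us := by
  cases us <;> simp [weave]

theorem exists_eq_weave_of_ed_weave_wpow_lt [DecidableEq α] {ss us : List (List α)} {ℓ : ℕ}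
    {w : List α} (hss : us.length ≤ ss.length)
    (h : ed (weave ss (us.map (fun u => wpow u ℓ))) w < ℓ) :
    ∃ ts, ts.length = us.length + 1 ∧ w = weave ts us := by
  induction us generalizing ss w with
  | nil => exact ⟨[w], rfl, by simp [weave]⟩
  | cons u us ih =>
    obtain _ | ⟨s, ss⟩ := ss
    · simp at hss
    rw [List.map_cons, weave_cons_cons] at h
    obtain ⟨w₁, w', rfl, hle⟩ := exists_append_eq_ed_add_le s
      (wpow u ℓ ++ weave ss (us.map (fun u => wpow u ℓ))) w
    obtain ⟨w₂, w₃, rfl, hle'⟩ := exists_append_eq_ed_add_le (wpow u ℓ)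
      (weave ss (us.map (fun u => wpow u ℓ))) w'
    obtain ⟨p, q, rfl⟩ := isInfix_of_ed_wpow_lt (u := u) (w := w₂) (n := ℓ) (by omega)
    obtain ⟨_ | ⟨t, ts⟩, hlength, rfl⟩ := ih (ss := ss) (by simpa using hss) (w := w₃) (by omega)
    · simp at hlength
    · refine ⟨(w₁ ++ p) :: (q ++ t) :: ts, by simpa using hlength, ?_⟩
      rw [weave_cons_cons, ← append_weave_cons]
      simp only [List.append_assoc]

end Weave

section Reachability

variable {α σ : Type*} (M : NFA α σ)

theorem evalFrom_mono (w : List α) : Monotone (M.evalFrom · w) := by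
  intro S T hST q hq
  obtain ⟨t, ht, hq⟩ := M.mem_evalFrom_iff_exists.1 hq
  exact M.mem_evalFrom_iff_exists.2 ⟨t, hST ht, hq⟩

/-- A set of states that no run of `M` leaves. The nested reachability sets have this property, so
the separating words `sᵢ` can be read inside them. -/
def IsForwardClosed (S : Set σ) : Prop :=
  ∀ w, M.evalFrom S w ⊆ S

theorem isForwardClosed_reachSet (u : List α) (S : Set σ) :
    IsForwardClosed M (reachSet M u S) := by
  intro w q hq
  obtain ⟨t, ⟨v, ht⟩, hq⟩ := M.mem_evalFrom_iff_exists.1 hq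
  refine ⟨v ++ w, ?_⟩
  rw [NFA.evalFrom_append]
  exact M.mem_evalFrom_iff_exists.2 ⟨t, ht, hq⟩

theorem evalFrom_subset_reachSet (u : List α) (S : Set σ) : M.evalFrom S u ⊆ reachSet M u S :=
  fun _ hq => ⟨[], hq⟩

variable {M}

theorem evalFrom_weave_subset_foldl_reachSet {S : Set σ} (hS : IsForwardClosed M S)
    {ts us : List (List α)} (hts : us.length ≤ ts.length) :
    M.evalFrom S (weave ts us) ⊆ us.foldl (fun S u => reachSet M u S) S := by
  induction us generalizing S ts with
  | nil => exact hS _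
  | cons u us ih =>
    obtain _ | ⟨t, ts⟩ := ts
    · simp at hts
    have hread : M.evalFrom (M.evalFrom S t) u ⊆ reachSet M u S :=
      (evalFrom_mono M u (hS t)).trans (evalFrom_subset_reachSet M u S)
    rw [weave_cons_cons, NFA.evalFrom_append, NFA.evalFrom_append]
    exact (evalFrom_mono M _ hread).trans
      (ih (isForwardClosed_reachSet M u S) (by simpa using hts))

theorem le_ed_of_nested_reach_empty_general [DecidableEq α] {S : Set σ}
    (hS : IsForwardClosed M S) (hstart : M.start ⊆ S) {us : List (List α)}
    (hempty : us.foldl (fun S u => reachSet M u S) S = ∅) (ℓ : ℕ) {ss : List (List α)}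
    (hss : us.length ≤ ss.length) :
    ∀ w' ∈ M.accepts, ℓ ≤ ed (weave ss (us.map (fun u => wpow u ℓ))) w' := by
  rintro w' ⟨q, -, hq⟩
  by_contra! hlt
  obtain ⟨ts, hts, rfl⟩ := exists_eq_weave_of_ed_weave_wpow_lt hss hlt
  have hqS : q ∈ M.evalFrom S (weave ts us) := evalFrom_mono M _ hstart hq
  have hnested := evalFrom_weave_subset_foldl_reachSet hS (hts ▸ Nat.le_succ _) hqS
  rwa [hempty] at hnested

end Reachability

/-- If the nested reachability set of `u₁, …, u_k` (`k ≥ 1`) is empty in a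
safety NFA, then every accepted word has edit distance at least `ℓ` from
`s₁u₁^ℓ⋯s_k u_k^ℓ s_{k+1}`. -/
theorem le_ed_of_nested_reach_empty {α σ : Type*} [DecidableEq α] [Fintype σ]
    (M : NFA α σ) (hsafety : M.accept = Set.univ)
    (us : List (List α)) (hk : 1 ≤ us.length)
    (hempty : us.foldl (fun S u => reachSet M u S) Set.univ = ∅)
    (ℓ : ℕ) (ss : List (List α)) (hss : ss.length = us.length + 1) :
    ∀ w' ∈ M.accepts, ℓ ≤ ed (weave ss (us.map (fun u => wpow u ℓ))) w' := by
  exact le_ed_of_nested_reach_empty_general (fun _ => Set.subset_univ _) (Set.subset_univ _)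
    hempty ℓ (hss ▸ Nat.le_succ _)
end

section
/- Let M be an NFA over an alphabet Σ with n states. For every word w in Pref(M.accepts) (i.e., w is a prefix of some accepted word), there exists a word w' with |w'| ≤ n such that the concatenation w·w' is accepted by M. -/
/-!
A word of length `m` accepted from a set `S` of states can be cut at `m + 1` positions; for each of
them pick a state through which some accepting run passes there. If `m` is at least the number of
states, two cuts share a state, and the factor between them can be deleted even if the two chosen
runs differ. So a shortest word accepted from `S` has fewer letters than there are states, and we
take for `S` the set of states reached by the given prefix.
-/

section AcceptsFrom

variable {α σ : Type*} {M : NFA α σ} {S : Set σ}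

theorem append_mem_acceptsFrom_iff_exists_state {x y : List α} :
    x ++ y ∈ M.acceptsFrom S ↔ ∃ q ∈ M.evalFrom S x, y ∈ M.acceptsFrom {q} := by
  rw [NFA.append_mem_acceptsFrom]
  constructor
  · rintro ⟨f, hf, hfy⟩
    obtain ⟨q, hq, hqf⟩ := NFA.mem_evalFrom_iff_exists.1 hfy
    exact ⟨q, hq, f, hf, hqf⟩
  · rintro ⟨q, hq, f, hf, hqf⟩
    exact ⟨f, hf, NFA.mem_evalFrom_iff_exists.2 ⟨q, hq, hqf⟩⟩

variable [Fintype σ]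

theorem exists_take_append_drop_mem_acceptsFrom {x : List α} (hx : x ∈ M.acceptsFrom S)
    (hcard : Fintype.card σ ≤ x.length) :
    ∃ i j, i < j ∧ j ≤ x.length ∧ x.take i ++ x.drop j ∈ M.acceptsFrom S := by
  have exists_state (i : Fin (x.length + 1)) :
      ∃ q ∈ M.evalFrom S (x.take i), x.drop i ∈ M.acceptsFrom {q} := by
    rwa [← append_mem_acceptsFrom_iff_exists_state, List.take_append_drop]
  choose q hq_take hq_drop using exists_state
  obtain ⟨i, j, hne, hq⟩ := Fintype.exists_ne_map_eq_of_card_lt q (by rw [Fintype.card_fin]; lia)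
  wlog hij : i < j generalizing i j
  · exact this j i hne.symm hq.symm (hne.symm.lt_of_le (not_lt.1 hij))
  exact ⟨i, j, hij, j.is_le,
    append_mem_acceptsFrom_iff_exists_state.2 ⟨q i, hq_take i, hq ▸ hq_drop j⟩⟩

theorem exists_mem_acceptsFrom_length_lt_card (hS : ∃ x, x ∈ M.acceptsFrom S) :
    ∃ y ∈ M.acceptsFrom S, y.length < Fintype.card σ := by
  obtain ⟨y, hy, hmin⟩ := exists_minimalFor_of_wellFoundedLT (· ∈ M.acceptsFrom S) List.length hS
  refine ⟨y, hy, lt_of_not_ge fun hcard ↦ ?_⟩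
  obtain ⟨i, j, hij, hj, hcut⟩ := exists_take_append_drop_mem_acceptsFrom hy hcard
  have hshort : (y.take i ++ y.drop j).length < y.length := by
    rw [List.length_append, List.length_take, List.length_drop]
    lia
  exact hshort.not_ge (hmin hcut hshort.le)

end AcceptsFrom

/-- Every prefix of an accepted word of an `n`-state NFA can be extended to an
accepted word by appending at most `n` letters. -/
theorem exists_short_extension_of_mem_prefLang {α σ : Type*} [Fintype σ] (M : NFA α σ)
    (w : List α) (hw : w ∈ prefLang M.accepts) :
    ∃ w' : List α, w'.length ≤ Fintype.card σ ∧ w ++ w' ∈ M.accepts := by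
  obtain ⟨v, hv⟩ := hw
  have hv_from : v ∈ M.acceptsFrom (M.evalFrom M.start w) := (NFA.append_mem_acceptsFrom M).1 hv
  obtain ⟨w', hw', hlt⟩ := exists_mem_acceptsFrom_length_lt_card ⟨v, hv_from⟩
  exact ⟨w', hlt.le, (NFA.append_mem_acceptsFrom M).2 hw'⟩
end
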